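/- arXiv:2304.04001 — 2 statements merged into one kernel-verified Lean document; each statement's English description precedes it below -/
import Mathlib

section
/- Let q ≥ 1. (1) If K_q(a,b,c) ≠ 0, then f has no q-periodic points in ℂ_p other than fixed points: if x ∈ ℂ_p is such that f(x), …, f^q(x) are all defined and f^q(x) = x, then f(x) = x. (2) If K_q(a,b,c) = 0, then f^q(x) = x for every x ∈ ℂ_p \ 𝒫_p. -/
/-!
The map `f` is the action on the projective line of `g = !![1, a; b, c]`, which is invertible since
`c ≠ a * b`. By Cayley–Hamilton, `g ^ q = K_q • g - (det g * K_{q-1}) • 1`. Adding a scalar matrix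
does not change the fixed-point polynomial of a Möbius transformation, so that of `g ^ q` is `K_q`
times that of `g`: either `K_q = 0` and `g ^ q` fixes everything, or `g ^ q` and `g` have the same
fixed points.
-/

open Matrix Matrix.GeneralLinearGroup Polynomial

section LucasSequence

variable {R : Type*} [CommRing R]

/-- The Lucas sequence `U_n(t, d)` of the first kind, whose characteristic polynomial is
`X² - t X + d`. It is encoded as a predicate so as to apply to any sequence given by its
recurrence. -/
structure IsLucasSeq (t d : R) (u : ℕ → R) : Prop where
  zero : u 0 = 0
  one : u 1 = 1
  add_two (n : ℕ) : u (n + 2) = t * u (n + 1) - d * u n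

theorem IsLucasSeq.of_one_of_two [NoZeroDivisors R] {t d : R} (hd : d ≠ 0) {u : ℕ → R}
    (h1 : u 1 = 1) (h2 : u 2 = t) (hu : ∀ n, u (n + 2) = t * u (n + 1) - d * u n) :
    IsLucasSeq t d u where
  zero := by
    have h : t = t - d * u 0 := by simpa only [zero_add, h1, h2, mul_one] using hu 0
    exact (mul_eq_zero.mp (sub_eq_self.mp h.symm)).resolve_left hd
  one := h1
  add_two := hu

theorem IsLucasSeq.pow_succ_eq {A : Type*} [Ring A] [Algebra R A] {t d : R} {u : ℕ → R}
    (hu : IsLucasSeq t d u) {x : A} (hx : x ^ 2 = t • x - d • 1) (n : ℕ) :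
    x ^ (n + 1) = u (n + 1) • x - (d * u n) • 1 := by
  induction n with
  | zero => simp [hu.zero, hu.one]
  | succ n ih =>
    calc x ^ (n + 2) = u (n + 1) • x ^ 2 - (d * u n) • x := by
          rw [pow_succ, ih, sub_mul, smul_mul_assoc, smul_mul_assoc, one_mul, ← sq]
      _ = u (n + 2) • x - (d * u (n + 1)) • 1 := by
          rw [hx, hu.add_two]
          module

theorem sq_eq_trace_smul_sub_det_smul_one (M : Matrix (Fin 2) (Fin 2) R) :
    M ^ 2 = M.trace • M - M.det • 1 := by
  nontriviality R
  have h : M ^ 2 - M.trace • M + M.det • 1 = 0 := by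
    simpa [charpoly_fin_two, Algebra.algebraMap_eq_smul_one] using M.aeval_self_charpoly
  rw [← sub_eq_zero, ← h]
  abel

theorem fixpointPolynomial_of_eq_smul_sub_smul_one {g h : GL (Fin 2) R} {r s : R}
    (hgh : h.val = r • g.val - s • 1) : h.fixpointPolynomial = C r * g.fixpointPolynomial := by
  simp only [fixpointPolynomial, hgh, Matrix.sub_apply, Matrix.smul_apply, smul_eq_mul,
    one_apply_eq, one_apply_ne zero_ne_one, one_apply_ne one_ne_zero, map_sub, map_mul, mul_zero,
    sub_zero]
  ring

theorem IsLucasSeq.fixpointPolynomial_pow {g : GL (Fin 2) R} {u : ℕ → R}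
    (hu : IsLucasSeq g.val.trace g.val.det u) (n : ℕ) :
    (g ^ n).fixpointPolynomial = C (u n) * g.fixpointPolynomial := by
  cases n with
  | zero => simp [fixpointPolynomial, hu.zero]
  | succ n =>
    exact fixpointPolynomial_of_eq_smul_sub_smul_one <| by
      rw [Units.val_pow_eq_pow_val, hu.pow_succ_eq (sq_eq_trace_smul_sub_det_smul_one _)]

end LucasSequence

theorem map_iterate_eq_pow_smul {M α β : Type*} [Monoid M] [MulAction M β] {g : M} {φ : α → β}
    {f : α → α} {x : α} {n : ℕ} (h : ∀ i < n, φ (f (f^[i] x)) = g • φ (f^[i] x)) :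
    φ (f^[n] x) = g ^ n • φ x := by
  induction n with
  | zero => simp
  | succ n ih =>
    rw [Function.iterate_succ_apply', h n n.lt_succ_self, pow_succ', mul_smul,
      ih fun i hi => h i (hi.trans n.lt_succ_self)]

section Moebius

variable {F : Type*} [Field F]

/-- The Möbius transformation `x ↦ (α x + β) / (γ x + δ)` of the affine line attached to the matrix
`!![α, β; γ, δ]`. It takes the junk value `0` at its pole. -/
def moebiusMap (M : Matrix (Fin 2) (Fin 2) F) (x : F) : F :=
  (M 0 0 * x + M 0 1) / (M 1 0 * x + M 1 1)

theorem coe_moebiusMap [DecidableEq F] {g : GL (Fin 2) F} {x : F} (hx : g 1 0 * x + g 1 1 ≠ 0) :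
    ((moebiusMap g.val x : F) : OnePoint F) = g • (x : OnePoint F) := by
  rw [OnePoint.smul_some_eq_ite, if_neg hx, moebiusMap]

theorem IsLucasSeq.pow_smul_eq_self_iff [DecidableEq F] {g : GL (Fin 2) F} {u : ℕ → F}
    (hu : IsLucasSeq g.val.trace g.val.det u) (n : ℕ) (z : OnePoint F) :
    g ^ n • z = z ↔ u n = 0 ∨ g • z = z := by
  cases z with
  | infty =>
    have hcoeff (h : GL (Fin 2) F) : h 1 0 = h.fixpointPolynomial.coeff 2 := by
      simp [fixpointPolynomial]
    simp only [OnePoint.smul_infty_eq_self_iff, hcoeff, hu.fixpointPolynomial_pow, coeff_C_mul,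
      mul_eq_zero]
  | coe x =>
    simp only [← fixpointPolynomial_aeval_eq_zero_iff, hu.fixpointPolynomial_pow, map_mul, aeval_C,
      Algebra.algebraMap_self_apply, mul_eq_zero]

theorem IsLucasSeq.iterate_moebiusMap_eq_self_iff {g : GL (Fin 2) F} {u : ℕ → F}
    (hu : IsLucasSeq g.val.trace g.val.det u) {n : ℕ} {x : F}
    (hx : ∀ i < n, g 1 0 * (moebiusMap g.val)^[i] x + g 1 1 ≠ 0) :
    (moebiusMap g.val)^[n] x = x ↔ u n = 0 ∨ moebiusMap g.val x = x := by
  classical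
  obtain rfl | hn := n.eq_zero_or_pos
  · simp [hu.zero]
  · have hiter : (((moebiusMap g.val)^[n] x : F) : OnePoint F) = g ^ n • (x : OnePoint F) :=
      map_iterate_eq_pow_smul fun i hi => coe_moebiusMap (hx i hi)
    have hone : ((moebiusMap g.val x : F) : OnePoint F) = g • (x : OnePoint F) :=
      coe_moebiusMap (hx 0 hn)
    rw [← OnePoint.coe_eq_coe, hiter, hu.pow_smul_eq_self_iff, ← hone, OnePoint.coe_eq_coe]

theorem stmt15_general {a b c : F} (hb : b ≠ 0) (hc : c ≠ a * b)
    {f : F → F} (hf : ∀ x, f x = (x + a) / (b * x + c))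
    {Kseq : ℕ → F} (hK1 : Kseq 1 = 1) (hK2 : Kseq 2 = 1 + c)
    (hKrec : ∀ q : ℕ, Kseq (q + 2) = (c + 1) * Kseq (q + 1) - (c - a * b) * Kseq q)
    {q : ℕ} {x : F} (hx : ∀ i < q, f^[i] x ≠ -c / b) :
    f^[q] x = x ↔ Kseq q = 0 ∨ f x = x := by
  have hdet : det !![1, a; b, c] = c - a * b := by simp [det_fin_two]
  have htrace : trace !![1, a; b, c] = c + 1 := by simp [trace_fin_two, add_comm]
  let g : GL (Fin 2) F := mkOfDetNeZero !![1, a; b, c] (hdet ▸ sub_ne_zero.mpr hc)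
  have hfg : f = moebiusMap g.val := funext fun y => by simp [hf, moebiusMap, g, mkOfDetNeZero]
  have hK : IsLucasSeq g.val.trace g.val.det Kseq := by
    change IsLucasSeq (trace !![1, a; b, c]) (det !![1, a; b, c]) Kseq
    rw [htrace, hdet]
    exact IsLucasSeq.of_one_of_two (sub_ne_zero.mpr hc) hK1 (hK2.trans (add_comm 1 c)) hKrec
  subst hfg
  refine hK.iterate_moebiusMap_eq_self_iff fun i hi hpole => hx i hi ?_
  exact (eq_div_iff hb).mpr <| (mul_comm _ b).trans <| eq_neg_of_add_eq_zero_left hpole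

end Moebius

/-- `ℂ_p` is modelled as a complete, algebraically closed,
nontrivially normed ultrametric field `K` which is a normed `ℚ_[p]`-algebra. Fix
`a b c ∈ K` with `b ≠ 0`, `c ≠ a*b`, let `f x = (x+a)/(b*x+c)` (defined for
`x ≠ x̂ = -c/b`), `𝒫_p = {x | ∃ n, f^[n] x = x̂}`, and `Kseq` defined by `Kseq 1 = 1`,
`Kseq 2 = 1+c`, `Kseq (q+2) = (c+1)*Kseq (q+1) - (c-ab)*Kseq q`. Let `q ≥ 1`.
(1) If `Kseq q ≠ 0`, then `f` has no `q`-periodic points other than fixed points: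
if `x` is such that `f x, …, f^[q] x` are all defined and `f^[q] x = x`, then `f x = x`.
(2) If `Kseq q = 0`, then `f^[q] x = x` for every `x ∉ 𝒫_p`. -/
theorem stmt15 (p : ℕ) [Fact p.Prime] (K : Type*) [NontriviallyNormedField K]
    [IsUltrametricDist K] [IsAlgClosed K] [CompleteSpace K] [NormedAlgebra ℚ_[p] K]
    (a b c : K) (hb : b ≠ 0) (hc : c ≠ a * b)
    (f : K → K) (hf : ∀ x, f x = (x + a) / (b * x + c))
    (P : Set K) (hP : P = {x : K | ∃ n : ℕ, f^[n] x = -c / b})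
    (Kseq : ℕ → K) (hK1 : Kseq 1 = 1) (hK2 : Kseq 2 = 1 + c)
    (hKrec : ∀ q : ℕ, Kseq (q + 2) = (c + 1) * Kseq (q + 1) - (c - a * b) * Kseq q)
    (q : ℕ) (hq : 1 ≤ q) :
    (Kseq q ≠ 0 →
      ∀ x : K, (∀ i : ℕ, i < q → f^[i] x ≠ -c / b) → f^[q] x = x → f x = x) ∧
    (Kseq q = 0 → ∀ x : K, x ∉ P → f^[q] x = x) :=
  ⟨fun hKq _ hx hper =>
      ((stmt15_general hb hc hf hK1 hK2 hKrec hx).mp hper).resolve_left hKq,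
    fun hKq _ hx =>
      (stmt15_general hb hc hf hK1 hK2 hKrec fun i _ hi => hx (hP ▸ ⟨i, hi⟩)).mpr (.inl hKq)⟩
end

section
/- Let x₁ ∈ ℂ_p be a fixed point of f and suppose |(c-ab)/(bx₁ + c)²|_p < 1 and |b/(bx₁ + c)|_p < 1. Then every x ∈ ℂ_p with |x - x₁|_p ≠ |(bx₁ + c)/b|_p lies in the basin of attraction of x₁: the whole forward orbit of x under f is well defined (never hits x̂) and lim_{n→∞} f^n(x) = x₁. -/
/-!
For `f x = (a * x + b) / (c * x + d)` and a fixed point `x₁` of `f` with multiplier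
`m = (a * d - b * c) / (c * x₁ + d) ^ 2`,
`f x - x₁ = m * ((c * x₁ + d) / (c * x + d)) * (x - x₁)`.
Since `c * x + d = c * (x - x₁) + (c * x₁ + d)`, in the ultrametric case `‖c * x + d‖` is the
maximum of `‖c * (x - x₁)‖` and `‖c * x₁ + d‖` as soon as these differ, that is, as soon as `x` is
off the sphere around `x₁` through the pole. The displacement formula then gives both
`‖f x - x₁‖ ≤ ‖m‖ * ‖x - x₁‖` and `‖c * (f x - x₁)‖ ≤ ‖m‖ * ‖c * x₁ + d‖`. If `‖m‖ < 1`, the second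
bound keeps orbits off the sphere, and the first makes them converge geometrically to `x₁`.
-/

open Filter Function Set
open scoped Topology

section Iterate

variable {X : Type*} [PseudoMetricSpace X] {f : X → X} {s : Set X} {x x₁ : X} {q : ℝ}

lemma tendsto_iterate_of_dist_le_mul (hq₀ : 0 ≤ q) (hq₁ : q < 1) (hs : MapsTo f s s)
    (hf : ∀ y ∈ s, dist (f y) x₁ ≤ q * dist y x₁) (hx : x ∈ s) :
    Tendsto (fun n : ℕ => f^[n] x) atTop (𝓝 x₁) := by
  have hgeom (n : ℕ) : dist (f^[n] x) x₁ ≤ q ^ n * dist x x₁ :=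
    le_geom (u := fun k => dist (f^[k] x) x₁) hq₀ n fun k _ => by
      simpa only [iterate_succ_apply'] using hf _ (hs.iterate k hx)
  have hlim : Tendsto (fun n : ℕ => q ^ n * dist x x₁) atTop (𝓝 0) := by
    simpa only [zero_mul] using
      (tendsto_pow_atTop_nhds_zero_of_lt_one hq₀ hq₁).mul_const (dist x x₁)
  exact tendsto_iff_dist_tendsto_zero.mpr (squeeze_zero (fun _ => dist_nonneg) hgeom hlim)

end Iterate

section Field

variable {K : Type*} [Field K] {a b c d x y : K}

/-- The linear fractional map with coefficient matrix `!![a, b; c, d]`, as a total function on the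
affine line: its value at the pole is the junk value `0`. -/
def linearFractional (a b c d x : K) : K :=
  (a * x + b) / (c * x + d)

lemma denom_ne_zero_of_fixedPt_eq (hdet : a * d - b * c ≠ 0)
    (hx : c * x ^ 2 + (d - a) * x - b = 0) : c * x + d ≠ 0 := fun hpole =>
  hdet (by linear_combination (a - c * x) * hpole + c * hx)

lemma isFixedPt_linearFractional_iff (hx : c * x + d ≠ 0) :
    IsFixedPt (linearFractional a b c d) x ↔ c * x ^ 2 + (d - a) * x - b = 0 := by
  rw [IsFixedPt, linearFractional, div_eq_iff hx]
  constructor <;> intro h <;> linear_combination -h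

lemma linearFractional_sub_linearFractional (hx : c * x + d ≠ 0) (hy : c * y + d ≠ 0) :
    linearFractional a b c d x - linearFractional a b c d y =
      (a * d - b * c) / (c * y + d) ^ 2 * ((c * y + d) / (c * x + d)) * (x - y) := by
  rw [linearFractional, linearFractional, div_sub_div _ _ hx hy, div_mul_div_comm,
    div_mul_eq_mul_div, div_eq_div_iff (mul_ne_zero hx hy) (mul_ne_zero (pow_ne_zero 2 hy) hx)]
  ring

end Field

section NormedField

variable {K : Type*} [NormedField K] {a b c d x y : K}

/-- The sphere centred at `y` passing through the pole `-d / c` of `linearFractional a b c d`. The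
equation of the sphere is multiplied by `‖c‖`, so that the set is empty for `c = 0`, `d ≠ 0`, when
there is no pole. -/
def poleSphere (c d y : K) : Set K :=
  {x | ‖c * (x - y)‖ = ‖c * y + d‖}

lemma mem_poleSphere_iff (hc : c ≠ 0) : x ∈ poleSphere c d y ↔ ‖x - y‖ = ‖(c * y + d) / c‖ := by
  rw [poleSphere, mem_ofPred_eq, norm_mul, norm_div, eq_div_iff (norm_ne_zero_iff.mpr hc), mul_comm]

lemma mem_poleSphere_of_denom_eq_zero (hx : c * x + d = 0) : x ∈ poleSphere c d y := by
  have hneg : c * (x - y) = -(c * y + d) := by linear_combination hx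
  rw [poleSphere, mem_ofPred_eq, hneg, norm_neg]

lemma denom_ne_zero_of_notMem_poleSphere (hx : x ∉ poleSphere c d y) : c * x + d ≠ 0 :=
  mt mem_poleSphere_of_denom_eq_zero hx

variable [IsUltrametricDist K]

lemma norm_denom_eq_max (hx : x ∉ poleSphere c d y) :
    ‖c * x + d‖ = max ‖c * (x - y)‖ ‖c * y + d‖ := by
  rw [← IsUltrametricDist.norm_add_eq_max_of_norm_ne_norm hx]
  ring_nf

lemma norm_linearFractional_sub_le (hy : c * y + d ≠ 0) (hx : x ∉ poleSphere c d y) :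
    ‖linearFractional a b c d x - linearFractional a b c d y‖ ≤
      ‖(a * d - b * c) / (c * y + d) ^ 2‖ * ‖x - y‖ := by
  have hratio : ‖(c * y + d) / (c * x + d)‖ ≤ 1 := by
    rw [norm_div, norm_denom_eq_max hx]
    exact div_le_one_of_le₀ (le_max_right _ _) (le_max_of_le_right (norm_nonneg _))
  rw [linearFractional_sub_linearFractional (denom_ne_zero_of_notMem_poleSphere hx) hy, norm_mul,
    norm_mul]
  gcongr
  exact mul_le_of_le_one_right (norm_nonneg _) hratio

lemma norm_mul_linearFractional_sub_le (hy : c * y + d ≠ 0) (hx : x ∉ poleSphere c d y) :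
    ‖c * (linearFractional a b c d x - linearFractional a b c d y)‖ ≤
      ‖(a * d - b * c) / (c * y + d) ^ 2‖ * ‖c * y + d‖ := by
  have hratio : ‖c * (x - y) / (c * x + d)‖ ≤ 1 := by
    rw [norm_div, norm_denom_eq_max hx]
    exact div_le_one_of_le₀ (le_max_left _ _) (le_max_of_le_right (norm_nonneg _))
  calc ‖c * (linearFractional a b c d x - linearFractional a b c d y)‖
      = ‖(a * d - b * c) / (c * y + d) ^ 2 * (c * y + d) * (c * (x - y) / (c * x + d))‖ := by
        rw [linearFractional_sub_linearFractional (denom_ne_zero_of_notMem_poleSphere hx) hy]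
        ring_nf
    _ = ‖(a * d - b * c) / (c * y + d) ^ 2‖ * ‖c * y + d‖ * ‖c * (x - y) / (c * x + d)‖ := by
        rw [norm_mul, norm_mul]
    _ ≤ ‖(a * d - b * c) / (c * y + d) ^ 2‖ * ‖c * y + d‖ :=
        mul_le_of_le_one_right (by positivity) hratio

lemma mapsTo_linearFractional_compl_poleSphere (hy : c * y + d ≠ 0)
    (hfix : IsFixedPt (linearFractional a b c d) y)
    (hmult : ‖(a * d - b * c) / (c * y + d) ^ 2‖ < 1) :
    MapsTo (linearFractional a b c d) (poleSphere c d y)ᶜ (poleSphere c d y)ᶜ := by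
  intro x hx
  have hle := norm_mul_linearFractional_sub_le (a := a) (b := b) hy hx
  rw [hfix.eq] at hle
  exact (hle.trans_lt (mul_lt_of_lt_one_left (norm_pos_iff.mpr hy) hmult)).ne

lemma tendsto_iterate_linearFractional (hy : c * y + d ≠ 0)
    (hfix : IsFixedPt (linearFractional a b c d) y)
    (hmult : ‖(a * d - b * c) / (c * y + d) ^ 2‖ < 1) (hx : x ∉ poleSphere c d y) :
    Tendsto (fun n : ℕ => (linearFractional a b c d)^[n] x) atTop (𝓝 y) := by
  refine tendsto_iterate_of_dist_le_mul (norm_nonneg _) hmult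
    (mapsTo_linearFractional_compl_poleSphere hy hfix hmult) (fun z hz => ?_) hx
  simpa only [dist_eq_norm, hfix.eq] using norm_linearFractional_sub_le (a := a) (b := b) hy hz

end NormedField

theorem stmt18_general {K : Type*} [NormedField K] [IsUltrametricDist K]
    {a b c : K} (hb : b ≠ 0) (hc : c ≠ a * b)
    {f : K → K} (hf : ∀ x, f x = (x + a) / (b * x + c))
    {x₁ : K} (hx₁ : b * x₁ ^ 2 + (c - 1) * x₁ - a = 0)
    (hder : ‖(c - a * b) / (b * x₁ + c) ^ 2‖ < 1)
    {x : K} (hx : ‖x - x₁‖ ≠ ‖(b * x₁ + c) / b‖) :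
    (∀ n : ℕ, f^[n] x ≠ -c / b) ∧ Tendsto (fun n : ℕ => f^[n] x) atTop (𝓝 x₁) := by
  obtain rfl : f = linearFractional 1 a b c :=
    funext fun y => by rw [hf, linearFractional, one_mul]
  have hden : b * x₁ + c ≠ 0 :=
    denom_ne_zero_of_fixedPt_eq (by rwa [one_mul, sub_ne_zero]) hx₁
  have hfix : IsFixedPt (linearFractional 1 a b c) x₁ :=
    (isFixedPt_linearFractional_iff hden).mpr hx₁
  have hmult : ‖(1 * c - a * b) / (b * x₁ + c) ^ 2‖ < 1 := by rwa [one_mul]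
  have hx' : x ∉ poleSphere b c x₁ := mt (mem_poleSphere_iff hb).mp hx
  have hpole : b * (-c / b) + c = 0 := by rw [mul_div_cancel₀ _ hb, neg_add_cancel]
  refine ⟨fun n hn => ?_, tendsto_iterate_linearFractional hden hfix hmult hx'⟩
  have hmem := (mapsTo_linearFractional_compl_poleSphere hden hfix hmult).iterate n hx'
  exact denom_ne_zero_of_notMem_poleSphere hmem (hn ▸ hpole)

/-- `ℂ_p` is modelled as a complete, algebraically closed,
nontrivially normed ultrametric field `K` which is a normed `ℚ_[p]`-algebra; its norm
`‖·‖` plays the role of `|·|_p`. Fix `a b c ∈ K` with `b ≠ 0`, `c ≠ a*b`, and let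
`f x = (x+a)/(b*x+c)` (defined for `x ≠ x̂ = -c/b`). Let `x₁` be a fixed point of `f`
and suppose `‖(c-ab)/(b*x₁+c)²‖ < 1` and `‖b/(b*x₁+c)‖ < 1`. Then every `x` with
`‖x - x₁‖ ≠ ‖(b*x₁+c)/b‖` lies in the basin of attraction of `x₁`: the whole forward
orbit of `x` is well defined (never hits `x̂`) and `f^[n] x → x₁` as `n → ∞`. -/
theorem stmt18 (p : ℕ) [Fact p.Prime] (K : Type*) [NontriviallyNormedField K]
    [IsUltrametricDist K] [IsAlgClosed K] [CompleteSpace K] [NormedAlgebra ℚ_[p] K]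
    (a b c : K) (hb : b ≠ 0) (hc : c ≠ a * b)
    (f : K → K) (hf : ∀ x, f x = (x + a) / (b * x + c))
    (x₁ : K) (hx₁ : b * x₁ ^ 2 + (c - 1) * x₁ - a = 0)
    (hder : ‖(c - a * b) / (b * x₁ + c) ^ 2‖ < 1)
    (hbb : ‖b / (b * x₁ + c)‖ < 1) :
    ∀ x : K, ‖x - x₁‖ ≠ ‖(b * x₁ + c) / b‖ →
      (∀ n : ℕ, f^[n] x ≠ -c / b) ∧
      Filter.Tendsto (fun n : ℕ => f^[n] x) Filter.atTop (nhds x₁) :=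
  fun _ hx => stmt18_general hb hc hf hx₁ hder hx
end
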